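/- Let G be a finite group of odd order n > 1, let q be the smallest prime divisor of n and p the largest prime divisor of n. If (q+1)·ψ(G) ≥ ψ(C_n), then G is solvable and every Sylow p-subgroup of G contains a cyclic subgroup of index p. -/

import Mathlib

/-- `psi G` is the sum of the orders of all elements of the finite group `G`. -/
noncomputable def psi (G : Type*) [Group G] [Fintype G] : ℕ := ∑ x : G, orderOf x

/-- `psiC n` is the sum of the orders of all elements of the cyclic group `C_n`. -/
noncomputable def psiC (n : ℕ) : ℕ := ∑ k ∈ Finset.range n, addOrderOf (k : ZMod n)

theorem psi_eq_sum_divisors (G : Type*) [Group G] [Fintype G] [IsCyclic G] :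
    psi G = ∑ d ∈ (Fintype.card G).divisors, d.totient * d := by
  classical
  have hmaps : ∀ x ∈ (Finset.univ : Finset G), orderOf x ∈ (Fintype.card G).divisors := fun x _ =>
    Nat.mem_divisors.2 ⟨orderOf_dvd_card, Fintype.card_ne_zero⟩
  rw [psi, ← Finset.sum_fiberwise_of_maps_to hmaps]
  refine Finset.sum_congr rfl fun d hd => ?_
  rw [Finset.sum_congr rfl fun x hx => (Finset.mem_filter.1 hx).2, Finset.sum_const,
    IsCyclic.card_orderOf_eq_totient (Nat.dvd_of_mem_divisors hd), smul_eq_mul]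

theorem psiC_eq_psi (n : ℕ) [NeZero n] : psiC n = psi (Multiplicative (ZMod n)) := by
  refine Finset.sum_bij' (fun k _ => Multiplicative.ofAdd (k : ZMod n))
    (fun x _ => (Multiplicative.toAdd x).val) (by simp) ?_ ?_ ?_ ?_
  · exact fun x _ => Finset.mem_range.2 (ZMod.val_lt _)
  · exact fun k hk => ZMod.val_cast_of_lt (Finset.mem_range.1 hk)
  · exact fun x _ => congrArg Multiplicative.ofAdd (ZMod.natCast_rightInverse _)
  · exact fun k _ => (orderOf_ofAdd_eq_addOrderOf _).symm

theorem psiC_eq_sum_divisors {n : ℕ} (hn : n ≠ 0) : psiC n = ∑ d ∈ n.divisors, d.totient * d := by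
  have : NeZero n := ⟨hn⟩
  rw [psiC_eq_psi, psi_eq_sum_divisors, Fintype.card_multiplicative, ZMod.card]

theorem psi_eq_psiC_card (G : Type*) [Group G] [Fintype G] [IsCyclic G] :
    psi G = psiC (Fintype.card G) := by
  rw [psi_eq_sum_divisors, psiC_eq_sum_divisors Fintype.card_ne_zero]

theorem Nat.Coprime.sum_divisors_totient_mul_self {a b : ℕ} (h : a.Coprime b) :
    ∑ d ∈ (a * b).divisors, d.totient * d =
      (∑ d ∈ a.divisors, d.totient * d) * ∑ d ∈ b.divisors, d.totient * d := by
  let f : ArithmeticFunction ℕ := ⟨fun d => d.totient * d, by simp⟩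
  have hf : f.IsMultiplicative := ⟨by simp [f], fun hmn => by
    simp only [f, ArithmeticFunction.coe_mk, Nat.totient_mul hmn]
    ring⟩
  have := (hf.mul ArithmeticFunction.isMultiplicative_zeta).map_mul_of_coprime h
  rwa [ArithmeticFunction.mul_zeta_apply, ArithmeticFunction.mul_zeta_apply,
    ArithmeticFunction.mul_zeta_apply] at this

theorem psiC_mul_of_coprime {a b : ℕ} (ha : a ≠ 0) (hb : b ≠ 0) (h : a.Coprime b) :
    psiC (a * b) = psiC a * psiC b := by
  rw [psiC_eq_sum_divisors ha, psiC_eq_sum_divisors hb, psiC_eq_sum_divisors (mul_ne_zero ha hb),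
    h.sum_divisors_totient_mul_self]

theorem sq_mul_le_psiC_prime_pow {r : ℕ} (hr : r.Prime) (a : ℕ) :
    (r ^ a) ^ 2 * r ≤ psiC (r ^ a) * (r + 1) := by
  suffices h : psiC (r ^ a) * (r + 1) = (r ^ a) ^ 2 * r + 1 by omega
  rw [psiC_eq_sum_divisors (pow_ne_zero _ hr.ne_zero), Nat.sum_divisors_prime_pow hr]
  induction a with
  | zero => simp
  | succ a ih =>
    rw [Finset.sum_range_succ, add_mul, ih, Nat.totient_prime_pow_succ hr]
    obtain ⟨s, rfl⟩ := Nat.exists_eq_succ_of_ne_zero hr.ne_zero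
    simp only [Nat.succ_eq_add_one, Nat.add_sub_cancel]
    ring

theorem sq_mul_prod_primeFactors_le_psiC {n : ℕ} (hn : n ≠ 0) :
    n ^ 2 * ∏ r ∈ n.primeFactors, r ≤ psiC n * ∏ r ∈ n.primeFactors, (r + 1) := by
  induction n using Nat.recOnPosPrimePosCoprime with
  | prime_pow r a hr ha =>
    rw [Nat.primeFactors_prime_pow ha.ne' hr, Finset.prod_singleton, Finset.prod_singleton]
    exact sq_mul_le_psiC_prime_pow hr a
  | zero => exact absurd rfl hn
  | one => simp [psiC]
  | coprime a b ha hb hab iha ihb =>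
    rw [hab.primeFactors_mul, Finset.prod_union hab.disjoint_primeFactors,
      Finset.prod_union hab.disjoint_primeFactors, psiC_mul_of_coprime (by omega) (by omega) hab]
    calc _ = (a ^ 2 * ∏ r ∈ a.primeFactors, r) * (b ^ 2 * ∏ r ∈ b.primeFactors, r) := by ring
      _ ≤ _ := Nat.mul_le_mul (iha (by omega)) (ihb (by omega))
      _ = _ := by ring

theorem mul_prod_succ_le_mul_prod {Q m : ℕ} (hQm : Q ≤ m) {S : Finset ℕ}
    (hS : S ⊆ Finset.Ico Q m) : Q * ∏ r ∈ S, (r + 1) ≤ m * ∏ r ∈ S, r := by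
  induction m, hQm using Nat.le_induction generalizing S with
  | base => simp_all
  | succ m hQm ih =>
    by_cases hm : m ∈ S
    · have hsub : S.erase m ⊆ Finset.Ico Q m := fun r hr => by
        have := Finset.mem_Ico.1 (hS (Finset.mem_of_mem_erase hr))
        have := Finset.ne_of_mem_erase hr
        exact Finset.mem_Ico.2 (by omega)
      rw [← Finset.mul_prod_erase S _ hm, ← Finset.mul_prod_erase S _ hm]
      calc _ = (m + 1) * (Q * ∏ r ∈ S.erase m, (r + 1)) := by ring
        _ ≤ (m + 1) * (m * ∏ r ∈ S.erase m, r) := Nat.mul_le_mul_left _ (ih hsub)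
    · have hsub : S ⊆ Finset.Ico Q m := fun r hr => by
        have := Finset.mem_Ico.1 (hS hr)
        have : r ≠ m := fun h => hm (h ▸ hr)
        exact Finset.mem_Ico.2 (by omega)
      exact (ih hsub).trans (Nat.mul_le_mul_right _ m.le_succ)

theorem sq_mul_le_psiC {n p Q : ℕ} (hn : n ≠ 0) (hQp : Q ≤ p)
    (hle : ∀ r : ℕ, r.Prime → r ∣ n → r ≤ p) (hge : ∀ r : ℕ, r.Prime → r ∣ n → Q ≤ r) :
    n ^ 2 * Q ≤ psiC n * (p + 1) := by
  have hprod := mul_prod_succ_le_mul_prod (Q := Q) (m := p + 1) (S := n.primeFactors) (by omega)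
    fun r hr => by
      have hr := Nat.mem_primeFactors.1 hr
      exact Finset.mem_Ico.2 ⟨hge r hr.1 hr.2.1, Nat.lt_succ_of_le (hle r hr.1 hr.2.1)⟩
  have hpos : 0 < ∏ r ∈ n.primeFactors, r :=
    Finset.prod_pos fun r hr => (Nat.prime_of_mem_primeFactors hr).pos
  refine Nat.le_of_mul_le_mul_right ?_ hpos
  calc _ = Q * (n ^ 2 * ∏ r ∈ n.primeFactors, r) := by ring
    _ ≤ Q * (psiC n * ∏ r ∈ n.primeFactors, (r + 1)) :=
      Nat.mul_le_mul_left _ (sq_mul_prod_primeFactors_le_psiC hn)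
    _ = psiC n * (Q * ∏ r ∈ n.primeFactors, (r + 1)) := by ring
    _ ≤ psiC n * ((p + 1) * ∏ r ∈ n.primeFactors, r) := Nat.mul_le_mul_left _ hprod
    _ = _ := by ring

theorem exists_psi_le_card_mul_orderOf (G : Type*) [Group G] [Fintype G] :
    ∃ x : G, psi G ≤ Fintype.card G * orderOf x := by
  obtain ⟨x, -, hx⟩ := Finset.exists_max_image Finset.univ (orderOf : G → ℕ) ⟨1, Finset.mem_univ _⟩
  refine ⟨x, (Finset.sum_le_card_nsmul _ _ _ hx).trans ?_⟩
  rw [Finset.card_univ, smul_eq_mul]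

theorem exists_index_zpowers_lt {G : Type*} [Group G] [Fintype G] {p Q : ℕ} (hQ : 3 ≤ Q)
    (hQp : Q ≤ p) (hle : ∀ r : ℕ, r.Prime → r ∣ Fintype.card G → r ≤ p)
    (hge : ∀ r : ℕ, r.Prime → r ∣ Fintype.card G → Q ≤ r)
    (hpsi : psiC (Fintype.card G) ≤ (Q + 1) * psi G) :
    ∃ x : G, (Subgroup.zpowers x).index < 2 * p := by
  obtain ⟨x, hx⟩ := exists_psi_le_card_mul_orderOf G
  refine ⟨x, ?_⟩
  have hcard : orderOf x * (Subgroup.zpowers x).index = Fintype.card G := by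
    rw [← Nat.card_zpowers, Subgroup.card_mul_index, Nat.card_eq_fintype_card]
  have hpos : 0 < Fintype.card G * orderOf x := Nat.mul_pos Fintype.card_pos (orderOf_pos x)
  generalize (Subgroup.zpowers x).index = i at *
  have hi : i * Q ≤ (Q + 1) * (p + 1) := by
    refine Nat.le_of_mul_le_mul_left ?_ hpos
    calc _ = Fintype.card G * (orderOf x * i) * Q := by ring
      _ = Fintype.card G ^ 2 * Q := by rw [hcard]; ring
      _ ≤ psiC (Fintype.card G) * (p + 1) := sq_mul_le_psiC Fintype.card_ne_zero hQp hle hge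
      _ ≤ (Q + 1) * (Fintype.card G * orderOf x) * (p + 1) :=
        Nat.mul_le_mul_right _ (hpsi.trans (Nat.mul_le_mul_left _ hx))
      _ = _ := by ring
  by_contra! h
  nlinarith

theorem isSolvable_of_sup_eq_top {G : Type*} [Group G] (N H : Subgroup G) [N.Normal]
    [Group.IsSolvable N] [Group.IsSolvable H] (h : N ⊔ H = ⊤) : Group.IsSolvable G := by
  have hsurj : Function.Surjective ((QuotientGroup.mk' N).comp H.subtype) := fun y => by
    obtain ⟨g, rfl⟩ := QuotientGroup.mk'_surjective N y
    obtain ⟨a, ha, b, hb, rfl⟩ := Subgroup.mem_sup_of_normal_left.1 (h ▸ Subgroup.mem_top g)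
    refine ⟨⟨b, hb⟩, ?_⟩
    have ha1 : QuotientGroup.mk' N a = 1 := (QuotientGroup.eq_one_iff a).2 ha
    rw [map_mul, ha1, one_mul]
    rfl
  have : Group.IsSolvable (G ⧸ N) := Group.isSolvable_of_surjective hsurj
  exact Group.isSolvable_of_ker_le_range N.subtype (QuotientGroup.mk' N) (by simp)

theorem isCoatom_of_prime_index {G : Type*} [Group G] {H : Subgroup G} (hH : H.index.Prime) :
    IsCoatom H := by
  refine ⟨fun h => hH.ne_one (Subgroup.index_eq_one.2 h), fun K hK => ?_⟩
  rw [← Subgroup.relIndex_mul_index hK.le] at hH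
  rcases Nat.prime_mul_iff.1 hH with h | h
  · exact Subgroup.index_eq_one.1 h.2
  · exact absurd (Subgroup.relIndex_eq_one.1 h.2) hK.not_ge

theorem Sylow.normal_of_card_le {G : Type*} [Group G] [Finite G] {p : ℕ} [hp : Fact p.Prime]
    (P : Sylow p G) (h : Nat.card (Sylow p G) ≤ p) : (P : Subgroup G).Normal := by
  have hmod := card_sylow_modEq_one p G
  have hlt : Nat.card (Sylow p G) < p :=
    h.lt_of_ne fun h => not_dvd_card_sylow p G h.symm.dvd
  have hone : Nat.card (Sylow p G) = 1 := hmod.eq_of_lt_of_lt hlt hp.out.one_lt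
  have : Subsingleton (Sylow p G) := (Nat.card_eq_one_iff_unique.1 hone).1
  exact P.normal_of_subsingleton

theorem isSolvable_of_prime_index_of_isMulCommutative {G : Type*} [Group G] [Finite G]
    (A : Subgroup G) [IsMulCommutative A] (hA : A.index.Prime) : Group.IsSolvable G := by
  have : Fact A.index.Prime := ⟨hA⟩
  have hcoatom := isCoatom_of_prime_index hA
  have hAsolv : Group.IsSolvable A := Group.isSolvable_of_comm mul_comm'
  by_cases hnorm : A.Normal
  · have hcyc : IsCyclic (G ⧸ A) := isCyclic_of_prime_card (p := A.index) rfl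
    have : Group.IsSolvable (G ⧸ A) := Group.isSolvable_of_comm hcyc.commGroup.mul_comm
    exact Group.isSolvable_of_ker_le_range A.subtype (QuotientGroup.mk' A) (by simp)
  obtain ⟨g, hg⟩ : ∃ g : G, ¬ A.map (MulAut.conj g).toMonoidHom ≤ A := by
    by_contra! h
    exact hnorm ⟨fun a ha g => h g (Subgroup.mem_map_of_mem _ ha)⟩
  set B : Subgroup G := A.map (MulAut.conj g).toMonoidHom with hB
  have hBindex : B.index = A.index := A.index_map_equiv (MulAut.conj g)
  have hcent : A ⊓ B ≤ Subgroup.center G := by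
    rw [← Subgroup.centralizer_univ, ← Subgroup.coe_top, Subgroup.le_centralizer_iff,
      ← hcoatom.2 (A ⊔ B) (left_lt_sup.2 hg), sup_le_iff]
    exact ⟨Subgroup.le_centralizer_iff.1 (inf_le_left.trans A.le_centralizer),
      Subgroup.le_centralizer_iff.1 (inf_le_right.trans B.le_centralizer)⟩
  obtain ⟨P⟩ := Sylow.nonempty (p := A.index) (G := G)
  have hle : Nat.card (Sylow A.index G) ≤ A.index := by
    have hdvd : Nat.card (Sylow A.index G) ∣ (A ⊓ B).index :=
      P.card_eq_index_normalizer ▸ Subgroup.index_dvd_of_le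
        (hcent.trans (Subgroup.center_le_normalizer _))
    rw [← Subgroup.relIndex_mul_index inf_le_left, Subgroup.inf_relIndex_left] at hdvd
    have hcop : (Nat.card (Sylow A.index G)).Coprime A.index :=
      (hA.coprime_iff_not_dvd.2 (not_dvd_card_sylow _ G)).symm
    refine (Nat.le_of_dvd (Nat.pos_of_ne_zero ?_) (hcop.dvd_of_dvd_mul_right hdvd)).trans ?_
    · exact Nat.card_pos.ne'
    · rw [← hBindex, ← Subgroup.relIndex_top_right B]
      exact Subgroup.relIndex_le_of_le_right le_top Nat.card_pos.ne'
  have := P.normal_of_card_le hle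
  have hPA : ¬ (P : Subgroup G) ≤ A := fun h => P.not_dvd_index (Subgroup.index_dvd_of_le h)
  have : Group.IsNilpotent P := P.2.isNilpotent
  exact isSolvable_of_sup_eq_top (P : Subgroup G) A (hcoatom.2 _ (right_lt_sup.2 hPA))

theorem normal_zpowers_of_mem {G : Type*} [Group G] (P : Subgroup G) [P.Normal] [IsCyclic P]
    {x : G} (hx : x ∈ P) : (Subgroup.zpowers x).Normal := by
  have key : ∀ g : G, ∃ m : ℤ, g * x * g⁻¹ = x ^ m := fun g => by
    obtain ⟨m, hm⟩ := (MulAut.conjNormal g : MulAut P).toMonoidHom.map_cyclic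
    refine ⟨m, ?_⟩
    have := congrArg (Subtype.val) (hm ⟨x, hx⟩)
    simpa using this
  refine ⟨?_⟩
  rintro _ ⟨k, rfl⟩ g
  obtain ⟨m, hm⟩ := key g
  refine ⟨m * k, ?_⟩
  simp only
  rw [← conj_zpow, hm, zpow_mul]

theorem orderOf_mul_le_of_normal_zpowers {G : Type*} [Group G] [Finite G] (x u : G)
    [(Subgroup.zpowers x).Normal] : orderOf (x * u) ≤ orderOf x * orderOf u := by
  have hmem : (x * u) ^ orderOf u ∈ Subgroup.zpowers x := by
    rw [← QuotientGroup.eq_one_iff]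
    have hx : (x : G ⧸ Subgroup.zpowers x) = 1 :=
      (QuotientGroup.eq_one_iff x).2 (Subgroup.mem_zpowers x)
    rw [QuotientGroup.mk_pow, QuotientGroup.mk_mul, hx, one_mul, ← QuotientGroup.mk_pow,
      pow_orderOf_eq_one, QuotientGroup.mk_one]
  refine orderOf_le_of_pow_eq_one (Nat.mul_pos (orderOf_pos x) (orderOf_pos u)) ?_
  rw [mul_comm, pow_mul]
  exact orderOf_dvd_iff_pow_eq_one.1 (orderOf_dvd_of_mem_zpowers hmem)

theorem psi_le_mul_of_isComplement' {G : Type*} [Group G] [Fintype G] (P K : Subgroup G)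
    [P.Normal] [IsCyclic P] [Fintype P] [Fintype K] (h : P.IsComplement' K) :
    psi G ≤ psi P * psi K := by
  rw [psi, psi, psi, Finset.sum_mul_sum, ← Finset.sum_product',
    ← (Equiv.ofBijective _ h).sum_comp]
  refine Finset.sum_le_sum fun x _ => ?_
  have := normal_zpowers_of_mem P x.1.2
  simpa using orderOf_mul_le_of_normal_zpowers (x.1 : G) (x.2 : G)

theorem exists_isCyclic_le_sylow {G : Type*} [Group G] [Finite G] {p : ℕ} [hp : Fact p.Prime]
    (hpd : p ∣ Nat.card G) (A : Subgroup G) [IsCyclic A] (hA : ¬ p ^ 2 ∣ A.index) (P : Sylow p G) :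
    ∃ H : Subgroup G, H ≤ (P : Subgroup G) ∧ IsCyclic H ∧
      (H.subgroupOf (P : Subgroup G)).index = p := by
  obtain ⟨v, hv⟩ : ∃ v, Nat.card P = p ^ (v + 1) := by
    obtain ⟨k, hk⟩ := P.2.exists_card_eq
    rcases k with - | k
    · have := P.dvd_card_of_dvd_card hpd
      rw [hk, pow_zero] at this
      exact absurd this hp.out.not_dvd_one
    · exact ⟨k, hk⟩
  have hdvd : p ^ v ∣ Nat.card A := by
    have h1 : p ^ (v + 1) ∣ Nat.card A * A.index := by
      rw [A.card_mul_index, ← hv]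
      exact Subgroup.card_subgroup_dvd_card _
    by_cases hpi : p ∣ A.index
    · obtain ⟨m, hm⟩ := hpi
      have hpm : ¬ p ∣ m := fun h => hA (by rw [hm, sq]; exact mul_dvd_mul_left p h)
      rw [hm, pow_succ, mul_left_comm, mul_comm (p ^ v)] at h1
      exact (Nat.Coprime.pow_left v (hp.out.coprime_iff_not_dvd.2 hpm)).dvd_of_dvd_mul_right
        (Nat.dvd_of_mul_dvd_mul_left hp.out.pos h1)
    · exact (Nat.Coprime.pow_left v (hp.out.coprime_iff_not_dvd.2 hpi)).dvd_of_dvd_mul_right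
        ((pow_dvd_pow p v.le_succ).trans h1)
  obtain ⟨K, hK⟩ := Sylow.exists_subgroup_card_pow_prime p hdvd
  have hKp : Nat.card (K.map A.subtype) = p ^ v := by
    rw [Subgroup.card_map_of_injective A.subtype_injective, hK]
  obtain ⟨R, hR⟩ := (IsPGroup.of_card hKp).exists_le_sylow
  obtain ⟨g, rfl⟩ := MulAction.exists_smul_eq G R P
  have hcyc : IsCyclic (K.map A.subtype) :=
    isCyclic_of_surjective _ (K.equivMapOfInjective _ A.subtype_injective).surjective
  have hle : (K.map A.subtype).map (MulAut.conj g).toMonoidHom ≤ (g • R : Sylow p G) :=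
    Subgroup.map_mono hR
  have e := (K.map A.subtype).equivMapOfInjective (MulAut.conj g).toMonoidHom
    (MulAut.conj g).injective
  refine ⟨_, hle, isCyclic_of_surjective _ e.surjective, ?_⟩
  have h := (Subgroup.subgroupOf ((K.map A.subtype).map (MulAut.conj g).toMonoidHom)
    ((g • R : Sylow p G) : Subgroup G)).card_mul_index
  rw [hv, Nat.card_congr (Subgroup.subgroupOfEquivOfLe hle).toEquiv, ← Nat.card_congr e.toEquiv,
    hKp, pow_succ] at h
  exact Nat.eq_of_mul_eq_mul_left (pow_pos hp.out.pos v) h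

theorem exists_normal_cyclic_sylow {G : Type*} [Group G] [Finite G] {p : ℕ} [hp : Fact p.Prime]
    (hodd : Odd (Nat.card G)) (hpodd : Odd p) (A : Subgroup G) [IsCyclic A] (hpA : ¬ p ∣ A.index)
    (hA : A.index < 2 * p) : ∃ P : Sylow p G, IsCyclic P ∧ (P : Subgroup G).Normal := by
  obtain ⟨K⟩ := Sylow.nonempty (p := p) (G := A)
  have hKA : (K : Subgroup A).map A.subtype ≤ A := Subgroup.map_subtype_le _
  have hKindex : ¬ p ∣ ((K : Subgroup A).map A.subtype).index := by
    rw [Subgroup.index_map_subtype, hp.out.dvd_mul]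
    exact not_or.2 ⟨K.not_dvd_index, hpA⟩
  let P : Sylow p G := (K.2.map A.subtype).toSylow hKindex
  have hcyc : IsCyclic P :=
    isCyclic_of_surjective _ ((K : Subgroup A).equivMapOfInjective _ A.subtype_injective).surjective
  refine ⟨P, hcyc, P.normal_of_card_le ?_⟩
  have hAN : A ≤ Subgroup.normalizer (P : Set G) := by
    have : IsMulCommutative A := ⟨⟨IsCyclic.commGroup.mul_comm⟩⟩
    have h1 := Subgroup.le_centralizer_iff.1 (hKA.trans A.le_centralizer)
    exact h1.trans (Subgroup.centralizer_le_normalizer _)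
  have hdvd : Nat.card (Sylow p G) ∣ A.index :=
    P.card_eq_index_normalizer ▸ Subgroup.index_dvd_of_le hAN
  have hpos : A.index ≠ 0 := Subgroup.index_ne_zero_of_finite
  have hlt := (Nat.le_of_dvd (Nat.pos_of_ne_zero hpos) hdvd).trans_lt hA
  have hoddS : Odd (Nat.card (Sylow p G)) := hodd.of_dvd_nat (hdvd.trans A.index_dvd_card)
  by_contra! hcon
  obtain ⟨k, hk⟩ := (Nat.modEq_iff_dvd' (by omega)).1 (card_sylow_modEq_one p G).symm
  have hk1 : k = 1 := by
    have h1 : 0 < k := Nat.pos_of_ne_zero fun h => by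
      have := hp.out.pos
      rw [h, mul_zero] at hk
      omega
    have h2 : k < 2 := by
      refine Nat.lt_of_mul_lt_mul_left (a := p) ?_
      omega
    omega
  rw [hk1, mul_one] at hk
  have hcard : Nat.card (Sylow p G) = p + 1 := by omega
  exact Nat.not_even_iff_odd.2 hoddS (hcard ▸ hpodd.add_one)

theorem isSolvable_of_succ_mul_psi_ge {Q : ℕ} (hQ : 3 ≤ Q) {G : Type*} [Group G] [Fintype G]
    (hodd : Odd (Fintype.card G)) (hge : ∀ r : ℕ, r.Prime → r ∣ Fintype.card G → Q ≤ r)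
    (hpsi : psiC (Fintype.card G) ≤ (Q + 1) * psi G) : Group.IsSolvable G := by
  induction hN : Fintype.card G using Nat.strong_induction_on generalizing G with
  | _ N ih =>
    subst hN
    rcases eq_or_ne (Fintype.card G) 1 with h1 | h1
    · have := Fintype.card_le_one_iff_subsingleton.1 h1.le
      exact Group.isSolvable_of_comm fun _ _ => Subsingleton.elim _ _
    obtain ⟨p, hpmem, hpmax⟩ := Finset.exists_max_image (Fintype.card G).primeFactors id
      (Nat.nonempty_primeFactors.2 (by have := Fintype.card_pos (α := G); omega))
    obtain ⟨hp, hpd, -⟩ := Nat.mem_primeFactors.1 hpmem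
    have : Fact p.Prime := ⟨hp⟩
    obtain ⟨x, hx⟩ := exists_index_zpowers_lt hQ (hge p hp hpd)
      (fun r hr hrd => hpmax r (Nat.mem_primeFactors.2 ⟨hr, hrd, Fintype.card_ne_zero⟩)) hge hpsi
    by_cases hpx : p ∣ (Subgroup.zpowers x).index
    · obtain ⟨m, hm⟩ := hpx
      have hm0 : (Subgroup.zpowers x).index ≠ 0 := Subgroup.index_ne_zero_of_finite
      have hm1 : m = 1 := by
        have : m < 2 := Nat.lt_of_mul_lt_mul_left (a := p) (by omega)
        have : m ≠ 0 := fun h => hm0 (by rw [hm, h, mul_zero])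
        omega
      rw [hm1, mul_one] at hm
      exact isSolvable_of_prime_index_of_isMulCommutative (Subgroup.zpowers x) (hm ▸ hp)
    obtain ⟨P, hPcyc, hPnorm⟩ := exists_normal_cyclic_sylow (by rwa [Nat.card_eq_fintype_card])
      (hodd.of_dvd_nat hpd) (Subgroup.zpowers x) hpx hx
    obtain ⟨K, hK⟩ := Subgroup.exists_right_complement'_of_coprime P.card_coprime_index
    have hcard := hK.card_mul_card
    have hcop : (Nat.card P).Coprime (Nat.card K) := by
      rw [← hK.symm.index_eq_card]
      exact P.card_coprime_index
    have : Fintype P := Fintype.ofFinite _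
    have : Fintype K := Fintype.ofFinite _
    have hle := psi_le_mul_of_isComplement' _ K hK
    simp only [Nat.card_eq_fintype_card] at hcard hcop
    have hKsolv : Group.IsSolvable K := by
      have hdvd : Fintype.card K ∣ Fintype.card G := Dvd.intro_left _ hcard
      refine ih _ ?_ (hodd.of_dvd_nat hdvd) (fun r hr hrd => hge r hr (hrd.trans hdvd)) ?_ rfl
      · have h1 : p ∣ Fintype.card P := by
          have := P.dvd_card_of_dvd_card (by rwa [Nat.card_eq_fintype_card])
          rwa [Nat.card_eq_fintype_card] at this
        have h2 := hp.one_lt.trans_le (Nat.le_of_dvd Fintype.card_pos h1)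
        have h3 : 0 < Fintype.card K := Fintype.card_pos
        rw [← hcard]
        exact lt_mul_of_one_lt_left h3 h2
      · rw [← hcard, psiC_mul_of_coprime Fintype.card_ne_zero Fintype.card_ne_zero hcop,
          ← psi_eq_psiC_card] at hpsi
        have hpos : 0 < psi P := Finset.sum_pos (fun x _ => orderOf_pos x) ⟨1, Finset.mem_univ _⟩
        refine Nat.le_of_mul_le_mul_left (hpsi.trans ?_) hpos
        rw [mul_left_comm]
        exact Nat.mul_le_mul_left _ hle
    have : Group.IsNilpotent P := P.2.isNilpotent
    exact isSolvable_of_sup_eq_top (P : Subgroup G) K hK.sup_eq_top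

theorem solvable_of_odd_of_succ_minFac_mul_psi_ge {G : Type*} [Group G] [Fintype G] (n p : ℕ)
    (hn : Fintype.card G = n) (h1 : 1 < n) (hodd : Odd n)
    (hp : p.Prime) (hpd : p ∣ n) (hpmax : ∀ r : ℕ, r.Prime → r ∣ n → r ≤ p)
    (hpsi : psiC n ≤ (n.minFac + 1) * psi G) :
    IsSolvable G ∧
    ∀ P : Sylow p G, ∃ H : Subgroup G, H ≤ (P : Subgroup G) ∧ IsCyclic H ∧
      (H.subgroupOf (P : Subgroup G)).index = p := by
  subst hn
  have hne : Fintype.card G ≠ 1 := h1.ne'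
  have hge : ∀ r : ℕ, r.Prime → r ∣ Fintype.card G → (Fintype.card G).minFac ≤ r :=
    fun r hr => Nat.minFac_le_of_dvd hr.two_le
  have hQ : 3 ≤ (Fintype.card G).minFac := by
    have h2 := (Nat.minFac_prime hne).two_le
    have h3 : (Fintype.card G).minFac ≠ 2 := fun h =>
      Nat.not_even_iff_odd.2 hodd (even_iff_two_dvd.2 (h ▸ Nat.minFac_dvd _))
    omega
  refine ⟨isSolvable_of_succ_mul_psi_ge hQ hodd hge hpsi, fun P => ?_⟩
  have : Fact p.Prime := ⟨hp⟩
  have hp3 := hQ.trans (hge p hp hpd)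
  obtain ⟨x, hx⟩ := exists_index_zpowers_lt hQ (hge p hp hpd) hpmax hge hpsi
  refine exists_isCyclic_le_sylow (by rwa [Nat.card_eq_fintype_card]) (Subgroup.zpowers x)
    (fun h => ?_) P
  have := Nat.le_of_dvd (Nat.pos_of_ne_zero Subgroup.index_ne_zero_of_finite) h
  nlinarith
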